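/- Let f be bistable (assumption (A2)) with interior zero u*, satisfying also (A4), and let c* be the heteroclinic speed. For c > c*, let P⁻_c be the unstable-manifold solution of dP/dU = −c − f(U)/P with P⁻_c(0) = 0, P⁻_c > 0 for U > 0, let P⁺_c be the stable-manifold solution with P⁺_c(1) = 0, P⁺_c > 0 for U < 1, and let u⁻(c) ∈ (u*,1) and u⁺(c) ∈ (u*,1) be the points where P⁻_c and P⁺_c respectively intersect the curve P = √(U·f(U)). Then there exists a constant α > 0 such that u⁻(c) − u* ≤ α/c² and 1 − u⁺(c) ≤ α/c² for all sufficiently large c; in particular u⁻(c) → u* and u⁺(c) → 1 as c → +∞. Moreover the minimum control cost E(c) = (3/2)∫_{u⁻(c)}^{u⁺(c)} √(f(u))/(u√u) du + (1/2)∫_{u⁻(c)}^{u⁺(c)} f'(u)/√(u·f(u)) du + c·ln(u⁺(c)/u⁻(c)) satisfies E(c) = c·|ln u*| + ∫_{u*}^{1} [ (3√(f(u)))/(2u√u) + f'(u)/(2√(u·f(u))) ] du + e(c), where |e(c)| ≤ K/c for some constant K and all large c. -/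

import Mathlib

open Set Filter

/-- A traveling profile of speed `c` for `u_t = f(u) + u_xx`. -/
def IsTravelingProfile (f : ℝ → ℝ) (c : ℝ) (U : ℝ → ℝ) : Prop :=
  ContDiff ℝ 2 U ∧ (∀ x, U x ∈ Icc (0:ℝ) 1) ∧
  (∀ x, deriv (deriv U) x + c * deriv U x + f (U x) = 0) ∧
  Tendsto U atBot (nhds 0) ∧ Tendsto U atTop (nhds 1)

/-!
On `(u*, 1)` an orbit of `dP/dU = -c - f(U)/P` decreases at rate at least `c`, so the length of an
arc over that interval is at most the drop of `P` divided by `c`. For the unstable arc the drop is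
at most `max P`, and `c P = -f` at an interior maximum, whence `u⁻(c) - u* = O(1/c²)`. For the
stable arc the drop is `√(u⁺ f(u⁺)) = O(√(1 - u⁺))`, whence `1 - u⁺(c) = O(1/c²)`.

The main term in the expansion of `E(c)` is the same cost taken between `u*` and `1`. The cost is
additive in the interval, so the error is the cost of the intervals `[u*, u⁻]` and `[u⁺, 1]` of
length `O(1/c²)`. Integrating `(2√(f(u)/u))'` removes the singular integrand `f'/√(uf)` and leaves a
cost of order `h + √h + c h` on an interval of length `h`.
-/

section Calculus

open MeasureTheory Topology

variable {f g g' u : ℝ → ℝ} {a b l x y α : ℝ}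

theorem pos_on_Ioo_of_deriv_pos_of_ne_zero (hf : ContinuousOn f (Ioo a b)) (hfa : f a = 0)
    (hf' : 0 < deriv f a) (hne : ∀ x ∈ Ioo a b, f x ≠ 0) : ∀ x ∈ Ioo a b, 0 < f x := by
  intro x hx
  by_contra! hfx
  have near_a : ∀ᶠ y in 𝓝[>] a, 0 < f y := by
    filter_upwards [(eventually_nhdsWithin_sign_eq_of_deriv_pos hf' hfa).filter_mono
      nhdsWithin_le_nhds, self_mem_nhdsWithin] with y hy hay
    rwa [sign_pos (sub_pos.2 hay), sign_eq_one_iff] at hy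
  obtain ⟨y, hfy, hy⟩ := (near_a.and (Ioo_mem_nhdsGT hx.1)).exists
  have hsub : Icc y x ⊆ Ioo a b := Icc_subset_Ioo hy.1 hx.2
  obtain ⟨z, hz, hfz⟩ := intermediate_value_Icc' hy.2.le (hf.mono hsub) ⟨hfx, hfy.le⟩
  exact hne z (hsub hz) hfz

theorem exists_pos_abs_le_mul_sub (hab : a ≤ b) (hf : ContDiffOn ℝ 1 f (Icc a b))
    (hfb : f b = 0) : ∃ L > 0, ∀ x ∈ Icc a b, |f x| ≤ L * (b - x) := by
  obtain ⟨K, hK⟩ := hf.exists_lipschitzOnWith one_ne_zero (convex_Icc a b) isCompact_Icc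
  refine ⟨K + 1, by positivity, fun x hx ↦ ?_⟩
  have hdist := hK.dist_le_mul b (right_mem_Icc.2 hab) x hx
  rw [Real.dist_eq, Real.dist_eq, hfb, zero_sub, abs_neg, abs_of_nonneg (sub_nonneg.2 hx.2)]
    at hdist
  linarith [hx.2]

theorem exists_pos_neg_le_and_mul_le_mul_one_sub (hf : ContDiffOn ℝ 1 f (Icc 0 1))
    (hf1 : f 1 = 0) :
    ∃ L > 0, (∀ x ∈ Icc 0 1, -L ≤ f x) ∧ ∀ x ∈ Icc 0 1, x * f x ≤ L * (1 - x) := by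
  obtain ⟨L, hL, hfL⟩ := exists_pos_abs_le_mul_sub zero_le_one hf hf1
  refine ⟨L, hL, fun x hx ↦ ?_, fun x hx ↦ ?_⟩
  · have hle : L * (1 - x) ≤ L := mul_le_of_le_one_right hL.le (sub_le_self 1 hx.1)
    exact (abs_le.1 ((hfL x hx).trans hle)).1
  · calc x * f x ≤ x * |f x| := mul_le_mul_of_nonneg_left (le_abs_self _) hx.1
      _ ≤ |f x| := mul_le_of_le_one_left (abs_nonneg _) hx.2
      _ ≤ L * (1 - x) := hfL x hx

theorem abs_sqrt_sub_sqrt_le_sqrt_abs_sub (x y : ℝ) : |√x - √y| ≤ √|x - y| := by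
  wlog hyx : y ≤ x generalizing x y
  · rw [abs_sub_comm, abs_sub_comm x]
    exact this y x (le_of_not_ge hyx)
  rw [abs_of_nonneg (sub_nonneg.2 (Real.sqrt_le_sqrt hyx)), abs_of_nonneg (sub_nonneg.2 hyx),
    sub_le_iff_le_add]
  have hle_sq : y ≤ √y ^ 2 := (le_max_left y 0).trans_eq Real.sq_sqrt'.symm
  refine Real.sqrt_le_iff.2 ⟨by positivity, ?_⟩
  nlinarith [Real.sq_sqrt (sub_nonneg.2 hyx), Real.sqrt_nonneg (x - y), Real.sqrt_nonneg y]

theorem abs_log_div_le_sub_div (ha : 0 < a) (hax : a ≤ x) (hxy : x ≤ y) :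
    |Real.log (y / x)| ≤ (y - x) / a := by
  have hx : 0 < x := ha.trans_le hax
  rw [abs_of_nonneg (Real.log_nonneg ((one_le_div hx).2 hxy))]
  calc Real.log (y / x) ≤ y / x - 1 := Real.log_le_sub_one_of_pos (div_pos (hx.trans_le hxy) hx)
    _ = (y - x) / x := by rw [sub_div, div_self hx.ne']
    _ ≤ (y - x) / a := div_le_div_of_nonneg_left (sub_nonneg.2 hxy) ha hax

theorem exists_abs_integral_le_mul_sub (hg : ContinuousOn g (Icc a b)) :
    ∃ B, ∀ x y, a ≤ x → x ≤ y → y ≤ b → |∫ t in x..y, g t| ≤ B * (y - x) := by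
  obtain ⟨B, hB⟩ := isCompact_Icc.exists_bound_of_continuousOn hg
  refine ⟨B, fun x y hax hxy hyb ↦ ?_⟩
  have hle := intervalIntegral.norm_integral_le_of_norm_le_const (a := x) (b := y) (f := g)
    fun t ht ↦ hB t (Icc_subset_Icc hax hyb (Ioc_subset_Icc_self (uIoc_of_le hxy ▸ ht)))
  rwa [abs_of_nonneg (sub_nonneg.2 hxy)] at hle

theorem tendsto_of_abs_sub_le_div_sq (hu : ∀ᶠ c in atTop, |u c - l| ≤ α / c ^ 2) :
    Tendsto u atTop (𝓝 l) := by
  rw [← tendsto_sub_nhds_zero_iff]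
  exact squeeze_zero_norm' hu (tendsto_const_nhds.div_atTop (tendsto_pow_atTop two_ne_zero))

theorem intervalIntegrable_deriv_of_nonpos (hab : a ≤ b) (hg : ContinuousOn g (Icc a b))
    (hderiv : ∀ x ∈ Ioo a b, HasDerivAt g (g' x) x) (hneg : ∀ x ∈ Ioo a b, g' x ≤ 0) :
    IntervalIntegrable g' volume a b := by
  rw [intervalIntegrable_iff_integrableOn_Ioc_of_le hab]
  simpa using (intervalIntegral.integrableOn_deriv_of_nonneg hg.neg
    (fun x hx ↦ (hderiv x hx).neg) fun x hx ↦ neg_nonneg.2 (hneg x hx)).neg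

theorem intervalIntegrable_deriv_of_eventually_nonneg_of_eventually_nonpos (hab : a < b)
    (hg : ContinuousOn g (Icc a b)) (hderiv : ∀ x ∈ Ioo a b, HasDerivAt g (g' x) x)
    (hg' : ContinuousOn g' (Ioo a b)) (ha : ∀ᶠ x in 𝓝[>] a, 0 ≤ g' x)
    (hb : ∀ᶠ x in 𝓝[<] b, g' x ≤ 0) : IntervalIntegrable g' volume a b := by
  obtain ⟨m, ham, hmb⟩ := exists_between hab
  obtain ⟨p, hp, hp_nonneg⟩ := (mem_nhdsGT_iff_exists_mem_Ioc_Ioo_subset ham).1 ha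
  obtain ⟨q, hq, hq_nonpos⟩ := (mem_nhdsLT_iff_exists_mem_Ico_Ioo_subset hmb).1 hb
  have hpq : p ≤ q := hp.2.trans hq.1
  have left : IntervalIntegrable g' volume a p :=
    (intervalIntegrable_iff_integrableOn_Ioc_of_le hp.1.le).2 <|
      intervalIntegral.integrableOn_deriv_of_nonneg
        (hg.mono (Icc_subset_Icc_right (hpq.trans hq.2.le)))
        (fun x hx ↦ hderiv x (Ioo_subset_Ioo_right (hpq.trans hq.2.le) hx)) hp_nonneg
  have middle : IntervalIntegrable g' volume p q :=
    (hg'.mono (Icc_subset_Ioo hp.1 hq.2)).intervalIntegrable_of_Icc hpq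
  have right : IntervalIntegrable g' volume q b :=
    intervalIntegrable_deriv_of_nonpos hq.2.le
      (hg.mono (Icc_subset_Icc_left (hp.1.le.trans hpq)))
      (fun x hx ↦ hderiv x (Ioo_subset_Ioo_left (hp.1.le.trans hpq) hx)) hq_nonpos
  exact (left.trans middle).trans right

end Calculus

section PhasePlane

/-- A positive solution of the phase-plane equation `dP/dU = -c - f(U)/P` over `(a, b)`, continuous
up to the endpoints, where `P` may vanish and the equation degenerate. -/
structure IsPhaseOrbit (f : ℝ → ℝ) (c : ℝ) (P : ℝ → ℝ) (a b : ℝ) : Prop where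
  continuousOn : ContinuousOn P (Icc a b)
  pos_and_hasDerivAt : ∀ u ∈ Ioo a b, 0 < P u ∧ HasDerivAt P (-c - f u / P u) u

namespace IsPhaseOrbit

variable {f P : ℝ → ℝ} {a b c s L M : ℝ}

theorem mono_left (h : IsPhaseOrbit f c P a b) (has : a ≤ s) : IsPhaseOrbit f c P s b where
  continuousOn := h.continuousOn.mono (Icc_subset_Icc_left has)
  pos_and_hasDerivAt u hu := h.pos_and_hasDerivAt u (Ioo_subset_Ioo_left has hu)

theorem mul_sub_le_sub (h : IsPhaseOrbit f c P a b) (hab : a ≤ b)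
    (hf : ∀ u ∈ Ioo a b, 0 ≤ f u) : c * (b - a) ≤ P a - P b := by
  have hdecay : P b - P a ≤ -c * (b - a) := by
    refine (convex_Icc a b).image_sub_le_mul_sub_of_deriv_le h.continuousOn ?_ ?_
      a (left_mem_Icc.2 hab) b (right_mem_Icc.2 hab) hab
    · rw [interior_Icc]
      exact fun u hu ↦ (h.pos_and_hasDerivAt u hu).2.differentiableAt.differentiableWithinAt
    · rw [interior_Icc]
      intro u hu
      obtain ⟨hP, hderiv⟩ := h.pos_and_hasDerivAt u hu
      rw [hderiv.deriv]
      linarith [div_nonneg (hf u hu) hP.le]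
  linarith

theorem mul_eq_neg_of_isLocalMax (h : IsPhaseOrbit f c P a b) (hs : s ∈ Ioo a b)
    (hmax : IsLocalMax P s) : c * P s = -f s := by
  obtain ⟨hP, hderiv⟩ := h.pos_and_hasDerivAt s hs
  have hslope := hmax.hasDerivAt_eq_zero hderiv
  field_simp at hslope
  linarith

theorem mul_le_of_lt (h : IsPhaseOrbit f c P a b) (hs : s ∈ Ioo a b) (hc : 0 < c)
    (ha : P a = 0) (hb : P b < P s) (hM : ∀ u ∈ Ioo a b, -M ≤ f u) : c * P s ≤ M := by
  obtain ⟨t, ht, hmax⟩ := isCompact_Icc.exists_isMaxOn ⟨s, Ioo_subset_Icc_self hs⟩ h.continuousOn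
  have hst : P s ≤ P t := hmax (Ioo_subset_Icc_self hs)
  have hta : t ≠ a := fun hta ↦ by
    rw [hta, ha] at hst
    exact hst.not_gt (h.pos_and_hasDerivAt s hs).1
  have htb : t ≠ b := fun htb ↦ (htb ▸ hst).not_gt hb
  have ht' : t ∈ Ioo a b := ⟨ht.1.lt_of_ne' hta, ht.2.lt_of_ne htb⟩
  calc c * P s ≤ c * P t := mul_le_mul_of_nonneg_left hst hc.le
    _ = -f t := h.mul_eq_neg_of_isLocalMax ht' (hmax.isLocalMax (Icc_mem_nhds ht'.1 ht'.2))
    _ ≤ M := neg_le.1 (hM t ht')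

theorem sub_le_div_sq_of_left_eq_zero (h : IsPhaseOrbit f c P a b) (hs : s ∈ Ioo a b)
    (hc : 0 < c) (ha : P a = 0) (hb : 0 ≤ P b) (hM : ∀ u ∈ Ioo a b, -M ≤ f u)
    (hf : ∀ u ∈ Ioo s b, 0 ≤ f u) : b - s ≤ M / c ^ 2 := by
  have hdrop : c * (b - s) ≤ P s - P b := (h.mono_left hs.1.le).mul_sub_le_sub hs.2.le hf
  have hPs : c * P s ≤ M := by
    have hpos : 0 < c * (b - s) := mul_pos hc (sub_pos.2 hs.2)
    exact h.mul_le_of_lt hs hc ha (by linarith) hM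
  rw [le_div_iff₀ (by positivity)]
  calc (b - s) * c ^ 2 = c * (c * (b - s)) := by ring
    _ ≤ c * P s := by gcongr; linarith
    _ ≤ M := hPs

theorem sub_le_div_sq_of_right_eq_zero (h : IsPhaseOrbit f c P a b) (hab : a < b)
    (hc : 0 < c) (hb : P b = 0) (hf : ∀ u ∈ Ioo a b, 0 ≤ f u) (ha : P a ^ 2 ≤ L * (b - a)) :
    b - a ≤ L / c ^ 2 := by
  have hdrop : c * (b - a) ≤ P a := by simpa [hb] using h.mul_sub_le_sub hab.le hf
  have hlen : 0 < b - a := sub_pos.2 hab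
  rw [le_div_iff₀ (by positivity)]
  refine le_of_mul_le_mul_right ?_ hlen
  calc (b - a) * c ^ 2 * (b - a) = (c * (b - a)) ^ 2 := by ring
    _ ≤ P a ^ 2 := by gcongr
    _ ≤ L * (b - a) := ha

end IsPhaseOrbit

end PhasePlane

section SwitchingCost

open MeasureTheory Topology

/-- The control cost of following the curve `P = √(U f(U))` from `U = x` to `U = y` at speed `c`,
that is `∫ (c + f/P + dP/dU) / U dU` along the curve; `E(c) = switchingCost f c (u⁻ c) (u⁺ c)`. -/
noncomputable def switchingCost (f : ℝ → ℝ) (c x y : ℝ) : ℝ :=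
  (3 / 2) * (∫ u in x..y, √(f u) / (u * √u)) + (1 / 2) * (∫ u in x..y, deriv f u / √(u * f u))
    + c * Real.log (y / x)

variable {f : ℝ → ℝ} {a b c x y z : ℝ}

theorem continuousOn_sqrt_div_mul_sqrt (hf : Continuous f) :
    ContinuousOn (fun u ↦ √(f u) / (u * √u)) (Ioi 0) :=
  hf.sqrt.continuousOn.div (by fun_prop) fun _ hu ↦ (mul_pos hu (Real.sqrt_pos.2 hu)).ne'

theorem intervalIntegrable_sqrt_div_mul_sqrt (hf : Continuous f) (hx : 0 < x) (hy : 0 < y) :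
    IntervalIntegrable (fun u ↦ √(f u) / (u * √u)) volume x y :=
  ((continuousOn_sqrt_div_mul_sqrt hf).mono
    fun _ hu ↦ (lt_min hx hy).trans_le hu.1).intervalIntegrable

theorem intervalIntegrable_deriv_div_two_mul_sqrt (hab : a < b) (hf : ContDiff ℝ 1 f)
    (hpos : ∀ u ∈ Ioo a b, 0 < f u) (ha : 0 < deriv f a) (hb : deriv f b < 0) :
    IntervalIntegrable (fun u ↦ deriv f u / (2 * √(f u))) volume a b := by
  have hf' : Continuous (deriv f) := hf.continuous_deriv le_rfl
  refine intervalIntegrable_deriv_of_eventually_nonneg_of_eventually_nonpos hab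
    hf.continuous.sqrt.continuousOn
    (fun u hu ↦ (hf.differentiable one_ne_zero u).hasDerivAt.sqrt (hpos u hu).ne') ?_ ?_ ?_
  · exact hf'.continuousOn.div (continuous_const.mul hf.continuous.sqrt).continuousOn fun u hu ↦
      (mul_pos two_pos (Real.sqrt_pos.2 (hpos u hu))).ne'
  · filter_upwards [(hf'.continuousAt.eventually_const_lt ha).filter_mono nhdsWithin_le_nhds]
      with u hu
    positivity
  · filter_upwards [(hf'.continuousAt.eventually_lt_const hb).filter_mono nhdsWithin_le_nhds]
      with u hu
    exact div_nonpos_of_nonpos_of_nonneg hu.le (by positivity)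

theorem intervalIntegrable_deriv_div_sqrt_mul (ha₀ : 0 < a) (hab : a < b) (hf : ContDiff ℝ 1 f)
    (hpos : ∀ u ∈ Ioo a b, 0 < f u) (ha : 0 < deriv f a) (hb : deriv f b < 0) :
    IntervalIntegrable (fun u ↦ deriv f u / √(u * f u)) volume a b := by
  have hpos_uIcc : ∀ u ∈ uIcc a b, 0 < u := fun u hu ↦
    ha₀.trans_le (uIcc_of_le hab.le ▸ hu).1
  have hweight : ContinuousOn (fun u ↦ 2 / √u) (uIcc a b) :=
    continuousOn_const.div (by fun_prop) fun u hu ↦ (Real.sqrt_pos.2 (hpos_uIcc u hu)).ne'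
  refine ((intervalIntegrable_deriv_div_two_mul_sqrt hab hf hpos ha hb).mul_continuousOn
    hweight).congr ?_
  intro u hu
  simp only [Real.sqrt_mul (hpos_uIcc u (uIoc_subset_uIcc hu)).le]
  ring

theorem hasDerivAt_two_mul_sqrt_div (hf : DifferentiableAt ℝ f x) (hx : 0 < x) (hfx : 0 < f x) :
    HasDerivAt (fun u ↦ 2 * √(f u / u)) (deriv f x / √(x * f x) - √(f x) / (x * √x)) x := by
  refine (((hf.hasDerivAt.div (hasDerivAt_id' x) hx.ne').sqrt
    (div_pos hfx hx).ne').const_mul 2).congr_deriv ?_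
  simp only [Pi.div_apply]
  rw [Real.sqrt_mul hx.le, Real.sqrt_div hfx.le]
  field_simp
  rw [Real.sq_sqrt hx.le, Real.sq_sqrt hfx.le]
  ring

theorem integral_deriv_div_sqrt_mul_eq (hx : 0 < x) (hxy : x ≤ y) (hf : Differentiable ℝ f)
    (hpos : ∀ u ∈ Ioo x y, 0 < f u)
    (h_int : IntervalIntegrable (fun u ↦ deriv f u / √(u * f u)) volume x y) :
    ∫ u in x..y, deriv f u / √(u * f u) =
      2 * √(f y / y) - 2 * √(f x / x) + ∫ u in x..y, √(f u) / (u * √u) := by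
  have h_int' := intervalIntegrable_sqrt_div_mul_sqrt hf.continuous hx (hx.trans_le hxy)
  rw [← sub_eq_iff_eq_add, ← intervalIntegral.integral_sub h_int h_int']
  refine intervalIntegral.integral_eq_sub_of_hasDerivAt_of_le hxy
    (f := fun u ↦ 2 * √(f u / u)) ?_ ?_ (h_int.sub h_int')
  · exact continuousOn_const.mul (hf.continuous.continuousOn.div continuousOn_id
      fun u hu ↦ (hx.trans_le hu.1).ne').sqrt
  · exact fun u hu ↦ hasDerivAt_two_mul_sqrt_div (hf u) (hx.trans hu.1) (hpos u hu)

theorem switchingCost_eq (hx : 0 < x) (hxy : x ≤ y) (hf : Differentiable ℝ f)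
    (hpos : ∀ u ∈ Ioo x y, 0 < f u)
    (h_int : IntervalIntegrable (fun u ↦ deriv f u / √(u * f u)) volume x y) :
    switchingCost f c x y =
      2 * (∫ u in x..y, √(f u) / (u * √u)) + (√(f y / y) - √(f x / x)) +
        c * Real.log (y / x) := by
  rw [switchingCost, integral_deriv_div_sqrt_mul_eq hx hxy hf hpos h_int]
  ring

theorem switchingCost_add_adjacent (hf : Continuous f) (hx : 0 < x) (hy : 0 < y) (hz : 0 < z)
    (hxy : IntervalIntegrable (fun u ↦ deriv f u / √(u * f u)) volume x y)
    (hyz : IntervalIntegrable (fun u ↦ deriv f u / √(u * f u)) volume y z) :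
    switchingCost f c x y + switchingCost f c y z = switchingCost f c x z := by
  rw [switchingCost, switchingCost, switchingCost,
    ← intervalIntegral.integral_add_adjacent_intervals hxy hyz,
    ← intervalIntegral.integral_add_adjacent_intervals
      (intervalIntegrable_sqrt_div_mul_sqrt hf hx hy)
      (intervalIntegrable_sqrt_div_mul_sqrt hf hy hz),
    Real.log_div hy.ne' hx.ne', Real.log_div hz.ne' hy.ne', Real.log_div hz.ne' hx.ne']
  ring

theorem switchingCost_one_right (hf : Continuous f) (ha₀ : 0 < a) (ha₁ : a ≤ 1)
    (h_int : IntervalIntegrable (fun u ↦ deriv f u / √(u * f u)) volume a 1) :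
    switchingCost f c a 1 = c * |Real.log a| +
      ∫ u in a..1, (3 * √(f u) / (2 * u * √u) + deriv f u / (2 * √(u * f u))) := by
  have h_int' := intervalIntegrable_sqrt_div_mul_sqrt hf ha₀ one_pos
  rw [switchingCost, ← intervalIntegral.integral_const_mul, ← intervalIntegral.integral_const_mul,
    ← intervalIntegral.integral_add (h_int'.const_mul _) (h_int.const_mul _), one_div a,
    Real.log_inv, abs_of_nonpos (Real.log_nonpos ha₀.le ha₁), add_comm]
  congr 2 with u
  ring

theorem exists_abs_sqrt_div_sub_sqrt_div_le (ha : 0 < a) (hf : ContDiff ℝ 1 f) :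
    ∃ M, ∀ x ∈ Icc a b, ∀ y ∈ Icc a b, |√(f y / y) - √(f x / x)| ≤ √(M * |y - x|) := by
  have hquot : ContDiffOn ℝ 1 (fun u ↦ f u / u) (Icc a b) :=
    hf.contDiffOn.div contDiffOn_id fun u hu ↦ (ha.trans_le hu.1).ne'
  obtain ⟨M, hM⟩ := hquot.exists_lipschitzOnWith one_ne_zero (convex_Icc a b) isCompact_Icc
  exact ⟨M, fun x hx y hy ↦ (abs_sqrt_sub_sqrt_le_sqrt_abs_sub _ _).trans
    (Real.sqrt_le_sqrt (hM.dist_le_mul y hy x hx))⟩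

theorem exists_abs_switchingCost_le (ha : 0 < a) (hf : ContDiff ℝ 1 f)
    (hpos : ∀ u ∈ Ioo a b, 0 < f u)
    (h_int : IntervalIntegrable (fun u ↦ deriv f u / √(u * f u)) volume a b) :
    ∃ B M, ∀ c ≥ 0, ∀ x y, a ≤ x → x ≤ y → y ≤ b →
      |switchingCost f c x y| ≤ B * (y - x) + √(M * (y - x)) + c * ((y - x) / a) := by
  obtain ⟨B, hB⟩ := exists_abs_integral_le_mul_sub (b := b)
    ((continuousOn_sqrt_div_mul_sqrt hf.continuous).mono fun u hu ↦ ha.trans_le hu.1)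
  obtain ⟨M, hM⟩ := exists_abs_sqrt_div_sub_sqrt_div_le (b := b) ha hf
  refine ⟨2 * B, M, fun c hc x y hax hxy hyb ↦ ?_⟩
  have hxy_sub : uIcc x y ⊆ uIcc a b := by
    rw [uIcc_of_le hxy, uIcc_of_le (hax.trans (hxy.trans hyb))]
    exact Icc_subset_Icc hax hyb
  rw [switchingCost_eq (ha.trans_le hax) hxy (hf.differentiable one_ne_zero)
    (fun u hu ↦ hpos u (Ioo_subset_Ioo hax hyb hu)) (h_int.mono_set hxy_sub)]
  refine (abs_add_three _ _ _).trans (add_le_add_three ?_ ?_ ?_)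
  · rw [abs_mul, abs_two, mul_assoc]
    gcongr
    exact hB x y hax hxy hyb
  · simpa only [abs_of_nonneg (sub_nonneg.2 hxy)] using
      hM x ⟨hax, hxy.trans hyb⟩ y ⟨hax.trans hxy, hyb⟩
  · rw [abs_mul, abs_of_nonneg hc]
    gcongr
    exact abs_log_div_le_sub_div ha hax hxy

theorem exists_abs_switchingCost_le_div (ha : 0 < a) (hf : ContDiff ℝ 1 f)
    (hpos : ∀ u ∈ Ioo a b, 0 < f u)
    (h_int : IntervalIntegrable (fun u ↦ deriv f u / √(u * f u)) volume a b) (α : ℝ) :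
    ∃ K, ∀ c ≥ 1, ∀ x y, a ≤ x → x ≤ y → y ≤ b → y - x ≤ α / c ^ 2 →
      |switchingCost f c x y| ≤ K / c := by
  obtain ⟨B, M, hBM⟩ := exists_abs_switchingCost_le ha hf hpos h_int
  refine ⟨|B| * α + √(|M| * α) + α / a, fun c hc x y hax hxy hyb hlen ↦ ?_⟩
  have hc₀ : 0 < c := one_pos.trans_le hc
  have hlen₀ : 0 ≤ y - x := sub_nonneg.2 hxy
  have hlen_mul : c * (y - x) ≤ α / c := by
    calc c * (y - x) ≤ c * (α / c ^ 2) := by gcongr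
      _ = α / c := by field_simp
  have hlen_le : y - x ≤ α / c := (le_mul_of_one_le_left hlen₀ hc).trans hlen_mul
  calc |switchingCost f c x y| ≤ B * (y - x) + √(M * (y - x)) + c * ((y - x) / a) :=
        hBM c hc₀.le x y hax hxy hyb
    _ ≤ |B| * (α / c) + √(|M| * (α / c ^ 2)) + α / c / a := by
        rw [← mul_div_assoc]
        gcongr
        exacts [le_abs_self B, le_abs_self M]
    _ = (|B| * α + √(|M| * α) + α / a) / c := by
        rw [← mul_div_assoc |M|, Real.sqrt_div' _ (by positivity), Real.sqrt_sq hc₀.le]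
        ring

theorem exists_abs_switchingCost_sub_le_div (ha : 0 < a) (hf : ContDiff ℝ 1 f)
    (hpos : ∀ u ∈ Ioo a b, 0 < f u)
    (h_int : IntervalIntegrable (fun u ↦ deriv f u / √(u * f u)) volume a b) (α : ℝ) :
    ∃ K, ∀ c ≥ 1, ∀ x ∈ Icc a b, ∀ y ∈ Icc a b, x - a ≤ α / c ^ 2 → b - y ≤ α / c ^ 2 →
      |switchingCost f c x y - switchingCost f c a b| ≤ K / c := by
  obtain ⟨K, hK⟩ := exists_abs_switchingCost_le_div ha hf hpos h_int α
  refine ⟨K + K, fun c hc x hx y hy hxa hyb ↦ ?_⟩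
  have hab : a ≤ b := hx.1.trans hx.2
  have h_int_sub : ∀ s ∈ Icc a b, ∀ t ∈ Icc a b,
      IntervalIntegrable (fun u ↦ deriv f u / √(u * f u)) volume s t := fun s hs t ht ↦
    h_int.mono_set (uIcc_of_le hab ▸ uIcc_subset_Icc hs ht)
  have ha_mem := left_mem_Icc.2 hab
  have hb_mem := right_mem_Icc.2 hab
  have hpos_Icc : ∀ u ∈ Icc a b, 0 < u := fun u hu ↦ ha.trans_le hu.1
  have hsplit_x := switchingCost_add_adjacent (c := c) hf.continuous ha (hpos_Icc x hx)
    (hpos_Icc y hy) (h_int_sub a ha_mem x hx) (h_int_sub x hx y hy)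
  have hsplit_y := switchingCost_add_adjacent (c := c) hf.continuous ha (hpos_Icc y hy)
    (hpos_Icc b hb_mem) (h_int_sub a ha_mem y hy) (h_int_sub y hy b hb_mem)
  calc |switchingCost f c x y - switchingCost f c a b|
      = |-(switchingCost f c a x + switchingCost f c y b)| := by
        rw [← hsplit_y, ← hsplit_x]; ring_nf
    _ ≤ |switchingCost f c a x| + |switchingCost f c y b| := by
        rw [abs_neg]; exact abs_add_le _ _
    _ ≤ K / c + K / c := add_le_add (hK c hc a x le_rfl hx.1 hx.2 hxa)
        (hK c hc y b hy.1 hy.2 le_rfl hyb)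
    _ = (K + K) / c := (add_div K K c).symm

end SwitchingCost

theorem asymptotic_cost_large_speed_general
    {f : ℝ → ℝ} (hf : ContDiff ℝ 1 f) (hf1 : f 1 = 0) {ustar : ℝ} (hustar : ustar ∈ Ioo (0 : ℝ) 1)
    (hpos : ∀ u ∈ Ioo ustar 1, 0 < f u)
    (h_int : IntervalIntegrable (fun u ↦ deriv f u / √(u * f u)) MeasureTheory.volume ustar 1)
    {c₀ : ℝ} {Pm Pp : ℝ → ℝ → ℝ} {um up : ℝ → ℝ}
    (hm : ∀ c, c₀ < c →
      um c ∈ Ioo ustar 1 ∧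
      ContinuousOn (Pm c) (Icc 0 (um c)) ∧ Pm c 0 = 0 ∧
      (∀ u ∈ Ioo (0 : ℝ) (um c), 0 < Pm c u ∧ HasDerivAt (Pm c) (-c - f u / Pm c u) u) ∧
      Pm c (um c) = √(um c * f (um c)))
    (hp : ∀ c, c₀ < c →
      up c ∈ Ioo ustar 1 ∧
      ContinuousOn (Pp c) (Icc (up c) 1) ∧ Pp c 1 = 0 ∧
      (∀ u ∈ Ioo (up c) (1 : ℝ), 0 < Pp c u ∧ HasDerivAt (Pp c) (-c - f u / Pp c u) u) ∧
      Pp c (up c) = √(up c * f (up c))) :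
    (∃ α > (0 : ℝ), ∃ c₁ : ℝ, ∀ c ≥ c₁, um c - ustar ≤ α / c ^ 2 ∧ 1 - up c ≤ α / c ^ 2) ∧
    Tendsto um atTop (nhds ustar) ∧ Tendsto up atTop (nhds 1) ∧
    (∃ K : ℝ, ∃ c₁ : ℝ, ∀ c ≥ c₁,
      |((3 / 2) * ∫ u in um c..up c, √(f u) / (u * √u))
        + ((1 / 2) * ∫ u in um c..up c, deriv f u / √(u * f u))
        + c * Real.log (up c / um c)
        - (c * |Real.log ustar|
            + ∫ u in ustar..(1 : ℝ),
                (3 * √(f u) / (2 * u * √u) + deriv f u / (2 * √(u * f u))))| ≤ K / c) := by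
  obtain ⟨L, hL, hfL, hmulL⟩ := exists_pos_neg_le_and_mul_le_mul_one_sub hf.contDiffOn hf1
  obtain ⟨K, hK⟩ := exists_abs_switchingCost_sub_le_div hustar.1 hf hpos h_int L
  have hlarge : ∀ c ≥ max 1 (c₀ + 1), 1 ≤ c ∧ c₀ < c := fun c hc ↦
    ⟨(le_max_left _ _).trans hc, (lt_add_one c₀).trans_le ((le_max_right _ _).trans hc)⟩
  have hum : ∀ c ≥ max 1 (c₀ + 1), um c - ustar ≤ L / c ^ 2 := by
    intro c hc
    obtain ⟨hmem, hcont, hleft, horbit, hright⟩ := hm c (hlarge c hc).2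
    exact IsPhaseOrbit.sub_le_div_sq_of_left_eq_zero ⟨hcont, horbit⟩ ⟨hustar.1, hmem.1⟩
      (one_pos.trans_le (hlarge c hc).1) hleft (hright ▸ Real.sqrt_nonneg _)
      (fun u hu ↦ hfL u ⟨hu.1.le, (hu.2.trans hmem.2).le⟩)
      fun u hu ↦ (hpos u ⟨hu.1, hu.2.trans hmem.2⟩).le
  have hup : ∀ c ≥ max 1 (c₀ + 1), 1 - up c ≤ L / c ^ 2 := by
    intro c hc
    obtain ⟨hmem, hcont, hright, horbit, hleft⟩ := hp c (hlarge c hc).2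
    have hup₀ : 0 < up c := hustar.1.trans hmem.1
    refine IsPhaseOrbit.sub_le_div_sq_of_right_eq_zero ⟨hcont, horbit⟩ hmem.2
      (one_pos.trans_le (hlarge c hc).1) hright
      (fun u hu ↦ (hpos u ⟨hmem.1.trans hu.1, hu.2⟩).le) ?_
    rw [hleft, Real.sq_sqrt (mul_pos hup₀ (hpos _ hmem)).le]
    exact hmulL _ ⟨hup₀.le, hmem.2.le⟩
  refine ⟨⟨L, hL, _, fun c hc ↦ ⟨hum c hc, hup c hc⟩⟩, tendsto_of_abs_sub_le_div_sq (α := L) ?_,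
    tendsto_of_abs_sub_le_div_sq (α := L) ?_, K, max 1 (c₀ + 1), fun c hc ↦ ?_⟩
  · filter_upwards [eventually_ge_atTop (max 1 (c₀ + 1))] with c hc
    rw [abs_of_pos (sub_pos.2 (hm c (hlarge c hc).2).1.1)]
    exact hum c hc
  · filter_upwards [eventually_ge_atTop (max 1 (c₀ + 1))] with c hc
    rw [abs_sub_comm, abs_of_pos (sub_pos.2 (hp c (hlarge c hc).2).1.2)]
    exact hup c hc
  · rw [← switchingCost_one_right hf.continuous hustar.1 hustar.2.le h_int]
    exact hK c (hlarge c hc).1 _ (Ioo_subset_Icc_self (hm c (hlarge c hc).2).1) _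
      (Ioo_subset_Icc_self (hp c (hlarge c hc).2).1) (hum c hc) (hup c hc)

/-- asymptotic behavior of the switching points `u⁻(c), u⁺(c)` and of the
minimum cost `E(c)` as `c → +∞`:
`u⁻(c) - u* ≤ α/c²`, `1 - u⁺(c) ≤ α/c²`, hence `u⁻(c) → u*`, `u⁺(c) → 1`, and
`E(c) = c|ln u*| + ∫_{u*}^1 [3√f/(2u√u) + f'/(2√(uf))] du + O(1/c)`. -/
theorem asymptotic_cost_large_speed
    (f : ℝ → ℝ) (hf : ContDiff ℝ 2 f) (hf0 : f 0 = 0) (hf1 : f 1 = 0)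
    (hf'0 : deriv f 0 < 0) (hf'1 : deriv f 1 < 0)
    (ustar : ℝ) (hustar : ustar ∈ Ioo (0:ℝ) 1)
    (hfz : ∀ u ∈ Ioo (0:ℝ) 1, f u = 0 ↔ u = ustar)
    (hf'u : 0 < deriv f ustar)
    (hA4 : ∀ u ∈ Icc ustar (1:ℝ),
      (4 - 2 * Real.sqrt 3) * deriv f u + 2 * u * deriv (deriv f) u ≤ 0)
    (cstar : ℝ) (hchar : ∀ c', (∃ U, IsTravelingProfile f c' U) ↔ c' = cstar)
    (Pm Pp : ℝ → ℝ → ℝ) (um up : ℝ → ℝ)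
    (hm : ∀ c, cstar < c →
      um c ∈ Ioo ustar 1 ∧
      ContinuousOn (Pm c) (Icc 0 (um c)) ∧ Pm c 0 = 0 ∧
      (∀ u ∈ Ioo (0:ℝ) (um c), 0 < Pm c u ∧ HasDerivAt (Pm c) (-c - f u / Pm c u) u) ∧
      Pm c (um c) = Real.sqrt (um c * f (um c)))
    (hp : ∀ c, cstar < c →
      up c ∈ Ioo ustar 1 ∧ um c < up c ∧
      ContinuousOn (Pp c) (Icc (up c) 1) ∧ Pp c 1 = 0 ∧
      (∀ u ∈ Ioo (up c) (1:ℝ), 0 < Pp c u ∧ HasDerivAt (Pp c) (-c - f u / Pp c u) u) ∧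
      Pp c (up c) = Real.sqrt (up c * f (up c))) :
    (∃ α > (0:ℝ), ∃ c₀ : ℝ, ∀ c ≥ c₀,
      um c - ustar ≤ α / c ^ 2 ∧ 1 - up c ≤ α / c ^ 2) ∧
    Tendsto um atTop (nhds ustar) ∧ Tendsto up atTop (nhds 1) ∧
    (∃ K : ℝ, ∃ c₁ : ℝ, ∀ c ≥ c₁,
      |((3 / 2) * ∫ u in um c..up c, Real.sqrt (f u) / (u * Real.sqrt u))
        + ((1 / 2) * ∫ u in um c..up c, deriv f u / Real.sqrt (u * f u))
        + c * Real.log (up c / um c)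
        - (c * |Real.log ustar|
            + ∫ u in ustar..(1:ℝ),
                (3 * Real.sqrt (f u) / (2 * u * Real.sqrt u)
                  + deriv f u / (2 * Real.sqrt (u * f u))))| ≤ K / c) := by
  have hpos := pos_on_Ioo_of_deriv_pos_of_ne_zero (b := 1) hf.continuous.continuousOn
    ((hfz ustar hustar).2 rfl) hf'u fun u hu hfu ↦
      hu.1.ne' ((hfz u ⟨hustar.1.trans hu.1, hu.2⟩).1 hfu)
  have hf_one : ContDiff ℝ 1 f := hf.of_le one_le_two
  exact asymptotic_cost_large_speed_general hf_one hf1 hustar hpos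
    (intervalIntegrable_deriv_div_sqrt_mul hustar.1 hustar.2 hf_one hpos hf'u hf'1) hm
    fun c hc ↦ (hp c hc).imp_right And.right
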